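/- Let Γ be an n-rose labeled graph with all labels positive such that either (a) exactly one pair {e, ē} of edges of Γ is mobile, or (b) n ≤ 3. Then the following are equivalent: (i) some reduced labeled graph obtained from Γ by a finite sequence of slide, induction and A^{±1}-moves, with all intermediate labeled graphs reduced, contains a strict ascending loop, i.e. a loop e with λ(e) = 1 ≠ λ(ē); (ii) Γ contains a strict monotone cycle. -/

import Mathlib

/-! Labeled graphs in the sense of generalized Baumslag–Solitar theory. -/

structure LGraph (V E : Type) where
  o : E → V
  bar : E → E
  bar_bar : ∀ e, bar (bar e) = e
  bar_ne : ∀ e, bar e ≠ e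
  lab : E → ℤ

namespace LGraph

variable {V E V' E' : Type}

/-- Terminal vertex of an oriented edge. -/
def t (G : LGraph V E) (e : E) : V := G.o (G.bar e)

/-- All labels are positive. -/
def Positive (G : LGraph V E) : Prop := ∀ e : E, 0 < G.lab e

/-- No collapsible edge: every label-1 edge is a loop. -/
def Reduced (G : LGraph V E) : Prop := ∀ e : E, G.lab e = 1 → G.o e = G.t e

/-- An `n`-rose: one vertex and `n` pairs of oriented edges. -/
def IsRose (G : LGraph V E) (n : ℕ) : Prop :=
  Nat.card V = 1 ∧ Nat.card E = 2 * n

/-- Modulus of a single oriented edge: `λ(ē)/λ(e)`. -/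
def qe (G : LGraph V E) (e : E) : ℚ := (G.lab (G.bar e) : ℚ) / (G.lab e : ℚ)

/-- Modulus of an edge path. -/
def q (G : LGraph V E) (l : List E) : ℚ := (l.map G.qe).prod

/-- Consecutive edges match up. -/
def IsEdgePath (G : LGraph V E) (l : List E) : Prop :=
  List.Chain' (fun a b => G.t a = G.o b) l

/-- An `e`-edge path. -/
def IsEEdgePath (G : LGraph V E) (e : E) (l : List E) : Prop :=
  G.IsEdgePath l ∧
  (∀ a ∈ l, a ≠ e ∧ a ≠ G.bar e) ∧
  (∀ a ∈ l.head?, G.o a = G.o e) ∧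
  ∀ i : Fin l.length, ∃ k : ℤ,
    (G.lab e : ℚ) * G.q (l.take i.1) = (k : ℚ) * (G.lab (l.get i) : ℚ)

/-- A monotone cycle `(e₁,…,eₛ,e)`. -/
def IsMonotoneCycle (G : LGraph V E) (l : List E) (e : E) : Prop :=
  G.IsEEdgePath (G.bar e) l ∧
  G.t (l.getLastD e) = G.o e ∧
  ∃ k : ℤ, G.q (l ++ [e]) = (k : ℚ)

/-- A strict monotone cycle. -/
def IsStrictMonotoneCycle (G : LGraph V E) (l : List E) (e : E) : Prop :=
  G.IsMonotoneCycle l e ∧ G.q (l ++ [e]) ≠ 1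

def HasStrictMonotoneCycle (G : LGraph V E) : Prop :=
  ∃ (l : List E) (e : E), G.IsStrictMonotoneCycle l e

/-- A strict `e`-integer cycle. -/
def IsStrictIntegerCycle (G : LGraph V E) (e : E) (l : List E) : Prop :=
  G.IsEEdgePath e l ∧ l ≠ [] ∧
  G.t (l.getLastD e) = G.o (l.headD e) ∧
  (∃ k : ℤ, G.q l = (k : ℚ)) ∧ G.q l ≠ 1

/-- A mobile edge. -/
def Mobile (G : LGraph V E) (e : E) : Prop :=
  (∃ l, G.IsStrictMonotoneCycle l e ∨ G.IsStrictMonotoneCycle l (G.bar e)) ∨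
  (∃ l, G.IsStrictIntegerCycle e l ∨ G.IsStrictIntegerCycle (G.bar e) l)

/-- The single slide of `e` over `f` is permitted. -/
def CanSlide (G : LGraph V E) (e f : E) : Prop :=
  f ≠ e ∧ f ≠ G.bar e ∧ G.o f = G.o e ∧ G.lab f ∣ G.lab e

open Classical in
/-- The result of the single slide of `e` over `f`. -/
noncomputable def slide (G : LGraph V E) (e f : E) : LGraph V E where
  o := fun x => if x = e then G.t f else G.o x
  bar := G.bar
  bar_bar := G.bar_bar
  bar_ne := G.bar_ne
  lab := fun x => if x = e then G.lab e * G.lab (G.bar f) / G.lab f else G.lab x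

/-- Successively slide `e` over the edges of a path. -/
noncomputable def slidePath : LGraph V E → E → List E → LGraph V E
  | G, _, [] => G
  | G, e, f :: l => slidePath (G.slide e f) e l

/-- Each single slide in the successive slide of `e` over a path is permitted. -/
def CanSlidePath : LGraph V E → E → List E → Prop
  | _, _, [] => True
  | G, e, f :: l => G.CanSlide e f ∧ CanSlidePath (G.slide e f) e l

/-- Each single slide is permitted and each intermediate graph is reduced. -/
def GoodSlidePath : LGraph V E → E → List E → Prop
  | _, _, [] => True
  | G, e, f :: l => G.CanSlide e f ∧ (G.slide e f).Reduced ∧ GoodSlidePath (G.slide e f) e l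

/-- Perform a finite sequence of single slides, given as pairs (slid edge, edge slid over). -/
noncomputable def slideSeq : LGraph V E → List (E × E) → LGraph V E
  | G, [] => G
  | G, p :: rest => slideSeq (G.slide p.1 p.2) rest

/-- A sequence of permitted single slides, each sliding a mobile edge. -/
def MobileSlideSeq : LGraph V E → List (E × E) → Prop
  | _, [] => True
  | G, p :: rest => G.Mobile p.1 ∧ G.CanSlide p.1 p.2 ∧ MobileSlideSeq (G.slide p.1 p.2) rest

/-- Isomorphism of labeled graphs. -/
def Isom (G : LGraph V E) (G' : LGraph V' E') : Prop :=
  ∃ (φ : V → V') (Φ : E → E'),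
    Function.Bijective φ ∧ Function.Bijective Φ ∧
    (∀ x, G'.o (Φ x) = φ (G.o x)) ∧
    (∀ x, G'.bar (Φ x) = Φ (G.bar x)) ∧
    (∀ x, G'.lab (Φ x) = G.lab x)

open Classical in
/-- The result of the induction move at the loop `e` with multiplier `m`. -/
noncomputable def inductionMove (G : LGraph V E) (e : E) (m : ℤ) : LGraph V E where
  o := G.o
  bar := G.bar
  bar_bar := G.bar_bar
  bar_ne := G.bar_ne
  lab := fun x => if x ≠ e ∧ x ≠ G.bar e ∧ G.o x = G.o e then m * G.lab x else G.lab x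

/-- `G'` is obtained from `G` by a single slide move (up to isomorphism). -/
def IsSlideMove (G : LGraph V E) (G' : LGraph V' E') : Prop :=
  ∃ e f, G.CanSlide e f ∧ Isom G' (G.slide e f)

/-- `G'` is obtained from `G` by a (forward) induction move. -/
def IsInductionMove (G : LGraph V E) (G' : LGraph V' E') : Prop :=
  ∃ (e : E) (m : ℤ), G.o e = G.t e ∧ G.lab e = 1 ∧ 1 ≤ m ∧ m ∣ G.lab (G.bar e) ∧
    Isom G' (G.inductionMove e m)

/-- `G'` is obtained from `G` by an A-move. -/
def IsAMove (G : LGraph V E) (G' : LGraph V' E') : Prop :=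
  ∃ (e d : E) (e' : E') (φ : V → V') (Φ : E → E'),
    G.o e = G.t e ∧ G.lab e = 1 ∧ G.lab (G.bar e) ≠ 1 ∧
    G.o d = G.o e ∧ G.t d ≠ G.o e ∧
    G.lab d ≠ 1 ∧ G.lab (G.bar d) ≠ 1 ∧ G.lab d ∣ G.lab (G.bar e) ∧
    (∀ x : E, G.o x = G.o e → x = e ∨ x = G.bar e ∨ x = d) ∧
    G'.o e' = φ (G.t d) ∧ G'.t e' = φ (G.t d) ∧
    G'.lab e' = G.lab (G.bar d) ∧
    G'.lab (G'.bar e') = G.lab (G.bar d) * G.lab (G.bar e) ∧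
    (∀ w₁ w₂ : V, w₁ ≠ G.o e → w₂ ≠ G.o e → φ w₁ = φ w₂ → w₁ = w₂) ∧
    (∀ v' : V', ∃ w : V, w ≠ G.o e ∧ φ w = v') ∧
    (∀ x : E, x ≠ e → x ≠ G.bar e → x ≠ d → x ≠ G.bar d →
      Φ x ≠ e' ∧ Φ x ≠ G'.bar e' ∧
      G'.o (Φ x) = φ (G.o x) ∧ G'.bar (Φ x) = Φ (G.bar x) ∧ G'.lab (Φ x) = G.lab x) ∧
    (∀ x y : E, x ≠ e → x ≠ G.bar e → x ≠ d → x ≠ G.bar d →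
      y ≠ e → y ≠ G.bar e → y ≠ d → y ≠ G.bar d → Φ x = Φ y → x = y) ∧
    (∀ y : E', y ≠ e' → y ≠ G'.bar e' →
      ∃ x : E, x ≠ e ∧ x ≠ G.bar e ∧ x ≠ d ∧ x ≠ G.bar d ∧ Φ x = y)

/-- A strict ascending loop: a loop with `λ(e) = 1 ≠ λ(ē)`. -/
def HasStrictAscendingLoop (G : LGraph V E) : Prop :=
  ∃ e : E, G.o e = G.t e ∧ G.lab e = 1 ∧ G.lab (G.bar e) ≠ 1

end LGraph

/-- A labeled graph with its vertex and edge types bundled. -/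
structure BGraph where
  V : Type
  E : Type
  G : LGraph V E

/-- An elementary deformation move: a slide, an induction move or its inverse,
or an A-move or its inverse. -/
def BGraph.ElemMove (X Y : BGraph) : Prop :=
  LGraph.IsSlideMove X.G Y.G ∨ LGraph.IsInductionMove X.G Y.G ∨
  LGraph.IsInductionMove Y.G X.G ∨ LGraph.IsAMove X.G Y.G ∨ LGraph.IsAMove Y.G X.G

/-- A finite sequence of elementary moves with all intermediate graphs reduced. -/
def BGraph.MoveSeq : BGraph → BGraph → Prop :=
  Relation.ReflTransGen (fun X Y => X.ElemMove Y ∧ Y.G.Reduced)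

/-- A reduced labeled graph is non-ascending if no reduced labeled graph obtained from it
by slide, induction and A-moves (all intermediate graphs reduced) contains a
strict ascending loop. -/
def LGraph.NonAscending {V E : Type} (G : LGraph V E) : Prop :=
  ∀ Y : BGraph, BGraph.MoveSeq ⟨V, E, G⟩ Y → ¬ Y.G.HasStrictAscendingLoop

/-! On a rose every edge may slide over every other one as soon as the labels divide, so a
sequence of slides of `e` just changes `λ(e)` within a class of the multiplicative congruence on
`ℤ` generated by `λ(f) ∼ λ(f̄)` for the other edges `f`. A strict monotone cycle through `e` is a
congruence `λ(ē) ∼ k λ(e)` with `k ≠ 1`: realising it by slides gives labels `a` and `k a` on `e`,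
and an inverse A-move turns this into a loop with labels `1` and `k`.

Conversely, without strict monotone cycles, `λ(ē) = m λ(e)` forces `m = 1`. So no loop is strictly
ascending, all induction moves are trivial and A-moves are impossible, and it remains to see that
slides create no strict monotone cycle. A slide of `i` over `j` preserves every congruence whose
generators include `j`; the labels at the ends of `j` are the only ones whose class, for the edges
other than `j`, can grow. There a new cycle would need a strict integer cycle avoiding both `i`
and `j`. Such a cycle makes both edges mobile; and it does not exist when at most one further pair
`{l, l̄}` is left, since then all ratios within a class are powers of `λ(l̄) / λ(l)`, and no power
of this ratio other than `1` is an integer. -/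

theorem iff_of_conGen {M : Type*} [CommMonoid M] {r : M → M → Prop} {P : M → Prop}
    (hP : ∀ u v, r u v → ∀ c, P (c * u) ↔ P (c * v)) {x y : M} (h : conGen r x y) :
    P x ↔ P y := by
  let C : Con M :=
    { r := fun x y => ∀ c, P (c * x) ↔ P (c * y)
      iseqv := ⟨fun _ _ => Iff.rfl, fun h c => (h c).symm, fun h h' c => (h c).trans (h' c)⟩
      mul' := fun {w x y z} hwx hyz c => by
        rw [← mul_assoc, mul_right_comm, hwx, mul_right_comm, hyz, mul_assoc] }
  have hle : conGen r ≤ C := Con.conGen_le.2 hP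
  simpa using hle h 1

theorem exists_zpow_of_conGen {M K : Type*} [Monoid M] [CommGroupWithZero K] (φ : M →* K)
    {t : K} (ht : t ≠ 0) {r : M → M → Prop}
    (hr : ∀ a b, r a b → ∃ n : ℤ, φ b = φ a * t ^ n) {x y : M} (h : conGen r x y) :
    ∃ n : ℤ, φ y = φ x * t ^ n := by
  induction h with
  | of x y hxy => exact hr x y hxy
  | refl x => exact ⟨0, by simp⟩
  | symm _ ih =>
    obtain ⟨n, hn⟩ := ih
    exact ⟨-n, by rw [hn, mul_assoc, ← zpow_add₀ ht, add_neg_cancel, zpow_zero, mul_one]⟩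
  | trans _ _ ih₁ ih₂ =>
    obtain ⟨⟨m, hm⟩, n, hn⟩ := And.intro ih₁ ih₂
    exact ⟨m + n, by rw [hn, hm, mul_assoc, zpow_add₀ ht]⟩
  | mul _ _ ih₁ ih₂ =>
    obtain ⟨⟨m, hm⟩, n, hn⟩ := And.intro ih₁ ih₂
    exact ⟨m + n, by rw [map_mul, map_mul, hm, hn, zpow_add₀ ht, mul_mul_mul_comm]⟩

theorem eq_one_of_eq_div_pow {u v k : ℤ} (hu : u ≠ 0) (huv : ∀ m, v = m * u → m = 1) {n : ℕ}
    (hk : (k : ℚ) = ((v : ℚ) / u) ^ n) : k = 1 := by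
  have hu' : (u : ℚ) ≠ 0 := mod_cast hu
  rcases eq_or_ne n 0 with rfl | hn
  · simpa using hk
  · have hkuv : v ^ n = u ^ n * k := by
      have : (v : ℚ) ^ n = u ^ n * k := by rw [hk, div_pow, mul_div_cancel₀ _ (pow_ne_zero n hu')]
      exact_mod_cast this
    obtain ⟨m, rfl⟩ := (Int.pow_dvd_pow_iff hn).1 ⟨k, hkuv⟩
    obtain rfl := huv m (mul_comm u m)
    simpa [hu'] using hk

theorem eq_one_of_eq_div_zpow {u v k : ℤ} (hu : u ≠ 0) (hv : v ≠ 0)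
    (huv : ∀ m, v = m * u → m = 1) (hvu : ∀ m, u = m * v → m = 1) {n : ℤ}
    (hk : (k : ℚ) = ((v : ℚ) / u) ^ n) : k = 1 := by
  obtain ⟨r, rfl | rfl⟩ := n.eq_nat_or_neg
  · exact eq_one_of_eq_div_pow hu huv (by simpa only [zpow_natCast] using hk)
  · refine eq_one_of_eq_div_pow hv hvu (n := r) ?_
    rw [hk, zpow_neg, zpow_natCast, ← inv_pow, inv_div]

namespace LGraph

variable {V E V' E' : Type}

/-- The edges other than `e` and `ē`, over which `e` may slide. -/
def others (G : LGraph V E) (e : E) : Set E := {e, G.bar e}ᶜ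

/-- The multiplicative congruence on `ℤ` generated by `λ(f) ∼ λ(f̄)` for `f ∈ S`. When all edges
have the same origin, a label is congruent to those it can become by slides over edges of `S`. -/
def labelCon (G : LGraph V E) (S : Set E) : Con ℤ :=
  conGen fun x y => ∃ f ∈ S, x = G.lab f ∧ y = G.lab (G.bar f)

/-- Modulo `G.labelCon S`, the label `x` is a multiple of `y` by a factor other than `1`. Strict
monotone cycles and strict integer cycles both amount to this, for suitable `S`, `x` and `y`. -/
def ReachesMultiple (G : LGraph V E) (S : Set E) (x y : ℤ) : Prop :=
  ∃ k ≠ 1, G.labelCon S x (k * y)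

section LabelCon

variable {G : LGraph V E} {S T : Set E} {e f i j : E} {x y : ℤ}

theorem bar_injective (G : LGraph V E) : Function.Injective G.bar :=
  Function.LeftInverse.injective G.bar_bar

theorem others_bar (G : LGraph V E) (e : E) : G.others (G.bar e) = G.others e := by
  rw [others, others, G.bar_bar, Set.pair_comm]

theorem bar_mem_others : G.bar f ∈ G.others e ↔ f ∈ G.others e := by
  have h : G.bar f = e ↔ f = G.bar e := by
    rw [← G.bar_injective.eq_iff, G.bar_bar]
  simp only [others, Set.mem_compl_iff, Set.mem_insert_iff, Set.mem_singleton_iff, h,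
    G.bar_injective.eq_iff, or_comm]

theorem mem_others_comm : f ∈ G.others e ↔ e ∈ G.others f := by
  rw [← bar_mem_others]
  simp only [others, Set.mem_compl_iff, Set.mem_insert_iff, Set.mem_singleton_iff,
    G.bar_injective.eq_iff, eq_comm, or_comm]

theorem others_eq_of_mem_pair (h : f ∈ ({e, G.bar e} : Set E)) : G.others f = G.others e := by
  rcases h with rfl | rfl
  · rfl
  · exact G.others_bar e

theorem CanSlide.mem_others (h : G.CanSlide i j) : j ∈ G.others i :=
  not_or.2 ⟨h.1, h.2.1⟩

theorem bar_mem_others_inter (hf : f ∈ G.others i ∩ G.others j) :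
    G.bar f ∈ G.others i ∩ G.others j :=
  ⟨bar_mem_others.2 hf.1, bar_mem_others.2 hf.2⟩

theorem labelCon_lab (hf : f ∈ S) : G.labelCon S (G.lab f) (G.lab (G.bar f)) :=
  Con.le_conGen _ _ ⟨f, hf, rfl, rfl⟩

theorem labelCon_mono (hST : S ⊆ T) : G.labelCon S ≤ G.labelCon T :=
  Con.conGen_mono fun _ _ ⟨f, hf, h⟩ => ⟨f, hST hf, h⟩

theorem labelCon_mul_left (h : G.labelCon S x y) (c : ℤ) : G.labelCon S (c * x) (c * y) :=
  (G.labelCon S).mul ((G.labelCon S).refl c) h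

theorem labelCon_induction {P : ℤ → Prop} (hS : ∀ f ∈ S, G.bar f ∈ S)
    (hP : ∀ f ∈ S, ∀ c, P (c * G.lab f) → P (c * G.lab (G.bar f)))
    (h : G.labelCon S x y) (hx : P x) : P y := by
  refine (iff_of_conGen ?_ h).1 hx
  rintro _ _ ⟨f, hf, rfl, rfl⟩ c
  refine ⟨hP f hf c, fun h => ?_⟩
  simpa only [G.bar_bar] using hP _ (hS f hf) c h

theorem eq_one_of_not_reachesMultiple {k : ℤ} (h : ¬ G.ReachesMultiple S x y)
    (hk : G.labelCon S x (k * y)) : k = 1 :=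
  by_contra fun hk' => h ⟨k, hk', hk⟩

theorem ReachesMultiple.mono (hST : S ⊆ T) (h : G.ReachesMultiple S x y) :
    G.ReachesMultiple T x y :=
  let ⟨k, hk, hxy⟩ := h
  ⟨k, hk, labelCon_mono hST hxy⟩

theorem ReachesMultiple.congr {x' y' : ℤ} (h : G.ReachesMultiple S x y)
    (hx : G.labelCon S x x') (hy : G.labelCon S y y') : G.ReachesMultiple S x' y' :=
  let ⟨k, hk, hxy⟩ := h
  ⟨k, hk, (G.labelCon S).trans ((G.labelCon S).symm hx)
    ((G.labelCon S).trans hxy (labelCon_mul_left hy k))⟩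

theorem ReachesMultiple.mul_left (h : G.ReachesMultiple S x y) (c : ℤ) :
    G.ReachesMultiple S (c * x) (c * y) := by
  obtain ⟨k, hk, hxy⟩ := h
  exact ⟨k, hk, by simpa only [mul_left_comm k c y] using labelCon_mul_left hxy c⟩

end LabelCon

section Cycles

variable {G : LGraph V E} {e f : E} {l : List E}

theorem q_append_singleton (G : LGraph V E) (l : List E) (f : E) :
    G.q (l ++ [f]) = G.q l * G.qe f := by
  simp [q]

theorem Positive.lab_ne_zero (hpos : G.Positive) (e : E) : (G.lab e : ℚ) ≠ 0 :=
  mod_cast (hpos e).ne'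

theorem isEEdgePath_nil (G : LGraph V E) (e : E) : G.IsEEdgePath e [] :=
  ⟨.nil, by simp, by simp, fun i => i.elim0⟩

theorem isEEdgePath_append_singleton [Subsingleton V] :
    G.IsEEdgePath e (l ++ [f]) ↔
      G.IsEEdgePath e l ∧ f ∈ G.others e ∧ ∃ k : ℤ, G.lab e * G.q l = k * G.lab f := by
  have hchain (l : List E) : G.IsEdgePath l :=
    (List.pairwise_of_forall fun _ _ => Subsingleton.elim _ _).isChain
  have hdiv : (∀ i : Fin (l ++ [f]).length, ∃ k : ℤ,
        (G.lab e : ℚ) * G.q ((l ++ [f]).take i) = k * G.lab ((l ++ [f]).get i)) ↔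
      (∀ i : Fin l.length, ∃ k : ℤ, (G.lab e : ℚ) * G.q (l.take i) = k * G.lab (l.get i)) ∧
        ∃ k : ℤ, (G.lab e : ℚ) * G.q l = k * G.lab f := by
    simp only [Fin.forall_iff, List.length_append, List.length_singleton,
      Nat.forall_lt_succ_right', List.get_eq_getElem]
    refine and_congr (forall₂_congr fun i hi => ?_) (by simp)
    rw [List.take_append_of_le_length hi.le, List.getElem_append_left hi]
  simp only [IsEEdgePath, hchain, true_and, hdiv, Subsingleton.elim (G.o _) (G.o e),
    List.forall_mem_append, List.forall_mem_singleton, others, Set.mem_compl_iff,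
    Set.mem_insert_iff, Set.mem_singleton_iff, not_or, implies_true]
  tauto

theorem IsEEdgePath.exists_labelCon [Subsingleton V] (hpos : G.Positive)
    (hl : G.IsEEdgePath e l) :
    ∃ y : ℤ, (y : ℚ) = G.lab e * G.q l ∧ G.labelCon (G.others e) (G.lab e) y := by
  induction l using List.reverseRecOn with
  | nil => exact ⟨G.lab e, by simp [q], (G.labelCon _).refl _⟩
  | append_singleton l f ih =>
    obtain ⟨hl, hf, k, hk⟩ := isEEdgePath_append_singleton.1 hl
    obtain ⟨y, hy, hcon⟩ := ih hl
    obtain rfl : y = k * G.lab f := by exact_mod_cast hy.trans hk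
    refine ⟨k * G.lab (G.bar f), ?_,
      (G.labelCon _).trans hcon (labelCon_mul_left (labelCon_lab hf) k)⟩
    rw [q_append_singleton, ← mul_assoc, hk, qe]
    have := hpos.lab_ne_zero f
    push_cast
    field_simp

theorem exists_isEEdgePath_of_labelCon [Subsingleton V] (hpos : G.Positive) {y : ℤ}
    (h : G.labelCon (G.others e) (G.lab e) y) :
    ∃ l, G.IsEEdgePath e l ∧ (y : ℚ) = G.lab e * G.q l := by
  refine labelCon_induction (P := fun y => ∃ l, G.IsEEdgePath e l ∧ (y : ℚ) = G.lab e * G.q l)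
    (fun f => bar_mem_others.2) ?_ h ⟨[], G.isEEdgePath_nil e, by simp [q]⟩
  rintro f hf c ⟨l, hl, hc⟩
  push_cast at hc
  refine ⟨l ++ [f], isEEdgePath_append_singleton.2 ⟨hl, hf, c, hc.symm⟩, ?_⟩
  rw [q_append_singleton, ← mul_assoc, ← hc, qe]
  have := hpos.lab_ne_zero f
  push_cast
  field_simp

theorem exists_isStrictMonotoneCycle_iff [Subsingleton V] (hpos : G.Positive) :
    (∃ l, G.IsStrictMonotoneCycle l e) ↔
      G.ReachesMultiple (G.others e) (G.lab (G.bar e)) (G.lab e) := by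
  have he := hpos.lab_ne_zero e
  have hq (l : List E) : G.q (l ++ [e]) * G.lab e = G.lab (G.bar e) * G.q l := by
    rw [q_append_singleton, qe]
    field_simp
  rw [← others_bar]
  constructor
  · rintro ⟨l, ⟨hl, -, k, hk⟩, hne⟩
    obtain ⟨y, hy, hcon⟩ := hl.exists_labelCon hpos
    obtain rfl : y = k * G.lab e := by
      rw [← hq, hk] at hy
      exact_mod_cast hy
    exact ⟨k, by rintro rfl; exact hne (by simpa using hk), hcon⟩
  · rintro ⟨k, hk, hcon⟩
    obtain ⟨l, hl, hy⟩ := exists_isEEdgePath_of_labelCon hpos hcon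
    have hqk : G.q (l ++ [e]) = k := by
      rw [← hq, Int.cast_mul] at hy
      exact (mul_right_cancel₀ he hy).symm
    exact ⟨l, ⟨hl, Subsingleton.elim _ _, k, hqk⟩, by rw [hqk]; exact_mod_cast hk⟩

theorem exists_isStrictIntegerCycle_iff [Subsingleton V] (hpos : G.Positive) :
    (∃ l, G.IsStrictIntegerCycle e l) ↔
      G.ReachesMultiple (G.others e) (G.lab e) (G.lab e) := by
  have he := hpos.lab_ne_zero e
  constructor
  · rintro ⟨l, hl, -, -, ⟨k, hk⟩, hne⟩
    obtain ⟨y, hy, hcon⟩ := hl.exists_labelCon hpos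
    obtain rfl : y = k * G.lab e := by
      rw [hk, mul_comm] at hy
      exact_mod_cast hy
    exact ⟨k, by rintro rfl; exact hne (by simpa using hk), hcon⟩
  · rintro ⟨k, hk, hcon⟩
    obtain ⟨l, hl, hy⟩ := exists_isEEdgePath_of_labelCon hpos hcon
    have hqk : G.q l = k := by
      rw [Int.cast_mul, mul_comm] at hy
      exact (mul_left_cancel₀ he hy).symm
    have hne : G.q l ≠ 1 := by rw [hqk]; exact_mod_cast hk
    exact ⟨l, hl, by rintro rfl; simp [q] at hne, Subsingleton.elim _ _, ⟨k, hqk⟩, hne⟩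

theorem hasStrictMonotoneCycle_iff [Subsingleton V] (hpos : G.Positive) :
    G.HasStrictMonotoneCycle ↔
      ∃ e, G.ReachesMultiple (G.others e) (G.lab (G.bar e)) (G.lab e) := by
  simp only [← exists_isStrictMonotoneCycle_iff hpos]
  exact exists_comm

theorem mobile_iff [Subsingleton V] (hpos : G.Positive) :
    G.Mobile e ↔ ∃ x ∈ ({e, G.bar e} : Set E), ∃ y ∈ ({e, G.bar e} : Set E),
      G.ReachesMultiple (G.others e) (G.lab x) (G.lab y) := by
  simp only [Mobile, exists_or, exists_isStrictMonotoneCycle_iff hpos,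
    exists_isStrictIntegerCycle_iff hpos, others_bar, G.bar_bar, Set.mem_insert_iff,
    Set.mem_singleton_iff, exists_eq_or_imp, exists_eq_left]
  tauto

theorem eq_one_of_labelCon_bar_lab [Subsingleton V] (hpos : G.Positive)
    (hno : ¬ G.HasStrictMonotoneCycle) {k : ℤ}
    (h : G.labelCon (G.others e) (G.lab (G.bar e)) (k * G.lab e)) : k = 1 := by
  rw [hasStrictMonotoneCycle_iff hpos, not_exists] at hno
  exact eq_one_of_not_reachesMultiple (hno e) h

theorem eq_one_of_labelCon_lab_bar [Subsingleton V] (hpos : G.Positive)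
    (hno : ¬ G.HasStrictMonotoneCycle) {k : ℤ}
    (h : G.labelCon (G.others e) (G.lab e) (k * G.lab (G.bar e))) : k = 1 :=
  eq_one_of_labelCon_bar_lab (e := G.bar e) hpos hno (by rwa [G.bar_bar, others_bar])

theorem eq_one_of_lab_bar_eq_mul [Subsingleton V] (hpos : G.Positive)
    (hno : ¬ G.HasStrictMonotoneCycle) {k : ℤ} (h : G.lab (G.bar e) = k * G.lab e) : k = 1 :=
  eq_one_of_labelCon_bar_lab (e := e) hpos hno (h ▸ (G.labelCon _).refl _)

end Cycles

section JointlyMobile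

variable {G : LGraph V E} {i j : E}

/-- A strict integer cycle avoiding both `i` and `j` starts at an end of `j`, or at `ī` when `i`
and `j` have the same label. Such cycles are the only reason why sliding `i` over `j` could
produce a strict monotone cycle. -/
def JointlyMobile (G : LGraph V E) (i j : E) : Prop :=
  G.ReachesMultiple (G.others i ∩ G.others j) (G.lab j) (G.lab j) ∨
  G.ReachesMultiple (G.others i ∩ G.others j) (G.lab (G.bar j)) (G.lab (G.bar j)) ∨
  G.lab i = G.lab j ∧
    G.ReachesMultiple (G.others i ∩ G.others j) (G.lab (G.bar i)) (G.lab (G.bar i))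

theorem JointlyMobile.mobile [Subsingleton V] (hpos : G.Positive) (hj : j ∈ G.others i)
    (hdvd : G.lab j ∣ G.lab i) (h : G.JointlyMobile i j) : G.Mobile i ∧ G.Mobile j := by
  have hi : i ∈ G.others j := mem_others_comm.1 hj
  have mobile_of (e : E) {x : E} (hx : x ∈ ({e, G.bar e} : Set E))
      (h : G.ReachesMultiple (G.others e) (G.lab x) (G.lab x)) : G.Mobile e :=
    (mobile_iff hpos).2 ⟨x, hx, x, hx, h⟩
  have mobile_i (h : G.ReachesMultiple (G.others i) (G.lab j) (G.lab j)) : G.Mobile i := by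
    obtain ⟨c, hc⟩ := hdvd
    refine mobile_of i (x := i) (by simp) ?_
    simpa only [hc, mul_comm] using h.mul_left c
  rcases h with h | h | ⟨heq, h⟩
  · exact ⟨mobile_i (h.mono Set.inter_subset_left),
      mobile_of j (x := j) (by simp) (h.mono Set.inter_subset_right)⟩
  · have hbar := (G.labelCon _).symm (labelCon_lab hj)
    exact ⟨mobile_i ((h.mono Set.inter_subset_left).congr hbar hbar),
      mobile_of j (x := G.bar j) (by simp) (h.mono Set.inter_subset_right)⟩
  · have hbar := (G.labelCon _).symm (labelCon_lab hi)
    refine ⟨mobile_of i (x := G.bar i) (by simp) (h.mono Set.inter_subset_left),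
      mobile_of j (x := j) (by simp) ?_⟩
    rw [← heq]
    exact (h.mono Set.inter_subset_right).congr hbar hbar

theorem two_add_encard_inter_others_le (G : LGraph V E) {S : Set E} {e : E} (he : e ∈ S)
    (he' : G.bar e ∈ S) : 2 + (S ∩ G.others e).encard ≤ S.encard := by
  rw [← Set.encard_pair (G.bar_ne e).symm, others, ← Set.sdiff_eq, add_comm,
    Set.encard_sdiff_add_encard_of_subset (Set.pair_subset he he')]

theorem exists_others_inter_subset_pair (hE : ENat.card E ≤ 6) (hj : j ∈ G.others i) :
    ∃ l, G.others i ∩ G.others j ⊆ {l, G.bar l} := by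
  rcases (G.others i ∩ G.others j).eq_empty_or_nonempty with h | ⟨l, hl⟩
  · exact ⟨i, by simp [h]⟩
  refine ⟨l, fun f hf => by_contra fun hfl => ?_⟩
  have hl' := bar_mem_others_inter hl
  have h₁ := G.two_add_encard_inter_others_le (Set.mem_univ i) (Set.mem_univ _)
  have h₂ := G.two_add_encard_inter_others_le hj (bar_mem_others.2 hj)
  have h₃ := G.two_add_encard_inter_others_le hl hl'
  have h₄ : 1 ≤ (G.others i ∩ G.others j ∩ G.others l).encard :=
    Set.one_le_encard_iff_nonempty.2 ⟨f, hf, hfl⟩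
  rw [Set.univ_inter, Set.encard_univ] at h₁
  have h₇ : (7 : ℕ∞) ≤ ENat.card E := calc
    (7 : ℕ∞) = 2 + (2 + (2 + 1)) := by norm_num
    _ ≤ 2 + (2 + (2 + (G.others i ∩ G.others j ∩ G.others l).encard)) := by gcongr
    _ ≤ 2 + (2 + (G.others i ∩ G.others j).encard) := by gcongr
    _ ≤ 2 + (G.others i).encard := by gcongr
    _ ≤ ENat.card E := h₁
  exact absurd (h₇.trans hE) (by norm_num)

theorem not_reachesMultiple_self_of_subset_pair [Subsingleton V] (hpos : G.Positive)
    (hno : ¬ G.HasStrictMonotoneCycle) {S : Set E} {l : E} (hS : S ⊆ {l, G.bar l}) {x : ℤ}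
    (hx : x ≠ 0) : ¬ G.ReachesMultiple S x x := by
  rintro ⟨k, hk, h⟩
  have hl := hpos.lab_ne_zero l
  have hl' := hpos.lab_ne_zero (G.bar l)
  obtain ⟨n, hn⟩ := exists_zpow_of_conGen (Int.castRingHom ℚ : ℤ →* ℚ)
    (t := G.lab (G.bar l) / G.lab l) (div_ne_zero hl' hl) (by
      rintro _ _ ⟨f, hf, rfl, rfl⟩
      rcases hS hf with rfl | rfl
      · exact ⟨1, by simp [mul_div_cancel₀ _ hl]⟩
      · exact ⟨-1, by simp [G.bar_bar, mul_div_cancel₀ _ hl']⟩) h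
  refine hk (eq_one_of_eq_div_zpow (hpos l).ne' (hpos _).ne'
    (fun m => eq_one_of_lab_bar_eq_mul hpos hno)
    (fun m hm => eq_one_of_lab_bar_eq_mul hpos hno (e := G.bar l) (by rwa [G.bar_bar]))
    (n := n) ?_)
  have hx' : (x : ℚ) ≠ 0 := mod_cast hx
  refine mul_left_cancel₀ hx' ?_
  simpa [mul_comm] using hn

theorem not_jointlyMobile_of_card_le_six [Subsingleton V] (hpos : G.Positive)
    (hno : ¬ G.HasStrictMonotoneCycle) (hE : ENat.card E ≤ 6) (hj : j ∈ G.others i) :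
    ¬ G.JointlyMobile i j := by
  obtain ⟨l, hl⟩ := exists_others_inter_subset_pair hE hj
  have hself (e : E) : ¬ G.ReachesMultiple (G.others i ∩ G.others j) (G.lab e) (G.lab e) :=
    not_reachesMultiple_self_of_subset_pair hpos hno hl (hpos e).ne'
  rintro (h | h | ⟨-, h⟩) <;> exact hself _ h

end JointlyMobile

section Relabel

open Classical in
/-- Replace the label of `e` by `y`. On a rose this is all that slides of `e` do. -/
noncomputable def relabel (G : LGraph V E) (e : E) (y : ℤ) : LGraph V E :=
  { G with lab := fun x => if x = e then y else G.lab x }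

variable {G : LGraph V E} {S : Set E} {e f i j : E} {c k x y : ℤ}

theorem relabel_lab_self (G : LGraph V E) (e : E) (y : ℤ) : (G.relabel e y).lab e = y :=
  if_pos rfl

theorem relabel_lab_of_ne (y : ℤ) (h : f ≠ e) : (G.relabel e y).lab f = G.lab f :=
  if_neg h

theorem relabel_lab_eq_self (G : LGraph V E) (e : E) : G.relabel e (G.lab e) = G := by
  rw [relabel]
  congr with x
  split_ifs with h
  · rw [h]
  · rfl

theorem relabel_relabel (G : LGraph V E) (e : E) (y z : ℤ) :
    (G.relabel e y).relabel e z = G.relabel e z := by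
  rw [relabel, LGraph.mk.injEq]
  refine ⟨rfl, rfl, funext fun x => ?_⟩
  by_cases hx : x = e
  · rw [if_pos hx, hx, relabel_lab_self]
  · rw [if_neg hx, relabel_lab_of_ne _ hx, relabel_lab_of_ne _ hx]

theorem slide_eq_relabel [Subsingleton V] (hj : G.lab j ≠ 0) (hc : G.lab i = c * G.lab j) :
    G.slide i j = G.relabel i (c * G.lab (G.bar j)) := by
  rw [slide, relabel, LGraph.mk.injEq]
  refine ⟨funext fun _ => Subsingleton.elim _ _, rfl, ?_⟩
  rw [hc, mul_right_comm, Int.mul_ediv_cancel _ hj]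

theorem Positive.relabel (hpos : G.Positive) (hy : 0 < y) : (G.relabel e y).Positive := by
  intro f
  by_cases hf : f = e
  · rwa [hf, relabel_lab_self]
  · rw [relabel_lab_of_ne y hf]
    exact hpos f

theorem labelCon_relabel_lab (hj : j ∈ S) (hc : G.lab i = c * G.lab j) (f : E) :
    G.labelCon S ((G.relabel i (c * G.lab (G.bar j))).lab f) (G.lab f) := by
  by_cases hf : f = i
  · rw [hf, relabel_lab_self, hc]
    exact labelCon_mul_left ((G.labelCon S).symm (labelCon_lab hj)) c
  · rw [relabel_lab_of_ne _ hf]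
    exact (G.labelCon S).refl _

theorem labelCon_relabel_le (hj : j ∈ S) (hc : G.lab i = c * G.lab j) :
    (G.relabel i (c * G.lab (G.bar j))).labelCon S ≤ G.labelCon S := by
  refine Con.conGen_le.2 ?_
  rintro _ _ ⟨f, hf, rfl, rfl⟩
  exact (G.labelCon S).trans (labelCon_relabel_lab hj hc f) ((G.labelCon S).trans
    (labelCon_lab hf) ((G.labelCon S).symm (labelCon_relabel_lab hj hc (G.bar f))))

/-- What a label at an end of `j` can become, without using `j`, after `i` has slid over `j`:
this is the only congruence class which the slide can enlarge. -/
def SlideOrbit (G : LGraph V E) (i j : E) (z : ℤ) : Prop :=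
  G.labelCon (G.others i ∩ G.others j) (G.lab j) z ∨
  G.labelCon (G.others i ∩ G.others j) (G.lab (G.bar j)) z ∨
  G.lab i = G.lab j ∧ G.labelCon (G.others i ∩ G.others j) (G.lab (G.bar i)) z

section Orbit

variable [Subsingleton V] (hpos : G.Positive) (hno : ¬ G.HasStrictMonotoneCycle)
  (hJ : ¬ G.JointlyMobile i j)

include hpos hno hJ

theorem SlideOrbit.eq_one_of_lab (h : G.SlideOrbit i j (k * G.lab j)) : k = 1 := by
  rcases h with h | h | ⟨hij, h⟩
  · exact eq_one_of_not_reachesMultiple (fun h => hJ (.inl h)) h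
  · exact eq_one_of_labelCon_bar_lab hpos hno (labelCon_mono Set.inter_subset_right h)
  · rw [← hij] at h
    exact eq_one_of_labelCon_bar_lab hpos hno (labelCon_mono Set.inter_subset_left h)

variable (hj : j ∈ G.others i)

include hj

theorem SlideOrbit.eq_one_of_lab_bar (h : G.SlideOrbit i j (k * G.lab (G.bar j))) : k = 1 := by
  rcases h with h | h | ⟨hij, h⟩
  · exact eq_one_of_labelCon_lab_bar hpos hno (labelCon_mono Set.inter_subset_right h)
  · exact eq_one_of_not_reachesMultiple (fun h => hJ (.inr (.inl h))) h
  · have hbar := labelCon_mul_left ((G.labelCon _).symm (labelCon_lab hj)) k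
    rw [← hij] at hbar
    exact eq_one_of_labelCon_bar_lab hpos hno
      ((G.labelCon _).trans (labelCon_mono Set.inter_subset_left h) hbar)

theorem SlideOrbit.mul_eq_one_of_bar (hc : G.lab i = c * G.lab j)
    (h : G.SlideOrbit i j (k * G.lab (G.bar i))) : c * k = 1 := by
  have of_lab_j (h : G.labelCon (G.others i) (G.lab j) (k * G.lab (G.bar i))) : c * k = 1 := by
    refine eq_one_of_labelCon_lab_bar (e := i) hpos hno ?_
    rw [hc, mul_assoc]
    exact labelCon_mul_left h c
  rcases h with h | h | ⟨hij, h⟩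
  · exact of_lab_j (labelCon_mono Set.inter_subset_left h)
  · exact of_lab_j ((G.labelCon _).trans (labelCon_lab hj)
      (labelCon_mono Set.inter_subset_left h))
  · have hc1 : c = 1 := by
      rw [hij] at hc
      exact (mul_eq_right₀ (hpos j).ne').1 hc.symm
    rw [hc1, one_mul]
    exact eq_one_of_not_reachesMultiple (fun h => hJ (.inr (.inr ⟨hij, h⟩))) h

theorem SlideOrbit.mul_lab_bar (hc : G.lab i = c * G.lab j) (hf : f ∈ G.others j)
    (h : G.SlideOrbit i j (k * (G.relabel i (c * G.lab (G.bar j))).lab f)) :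
    G.SlideOrbit i j (k * (G.relabel i (c * G.lab (G.bar j))).lab (G.bar f)) := by
  have hc0 : 0 ≤ c := (pos_of_mul_pos_left (hc ▸ hpos i) (hpos j).le).le
  by_cases hfi : f ∈ G.others i
  · rw [relabel_lab_of_ne _ fun h => hfi (.inl h)] at h
    rw [relabel_lab_of_ne _ fun h => bar_mem_others.2 hfi (.inl h)]
    have hstep := labelCon_mul_left (labelCon_lab (G := G) (Set.mem_inter hfi hf)) k
    exact h.imp ((G.labelCon _).trans · hstep) (.imp ((G.labelCon _).trans · hstep)
      (.imp_right ((G.labelCon _).trans · hstep)))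
  rcases not_not.1 hfi with rfl | rfl
  · rw [relabel_lab_self, ← mul_assoc] at h
    have hkc : k * c = 1 := h.eq_one_of_lab_bar hpos hno hJ hj
    obtain rfl : c = 1 := Int.eq_one_of_mul_eq_one_left hc0 hkc
    rw [relabel_lab_of_ne _ (G.bar_ne f), ← mul_one k, hkc, one_mul]
    exact .inr (.inr ⟨by rw [hc, one_mul], (G.labelCon _).refl _⟩)
  · rw [relabel_lab_of_ne _ (G.bar_ne i)] at h
    have hck := h.mul_eq_one_of_bar hpos hno hJ hj hc
    rw [G.bar_bar, relabel_lab_self, ← mul_assoc, mul_comm k, hck, one_mul]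
    exact .inr (.inl ((G.labelCon _).refl _))

theorem slideOrbit_of_labelCon_relabel (hc : G.lab i = c * G.lab j) (hx : G.SlideOrbit i j x)
    (h : (G.relabel i (c * G.lab (G.bar j))).labelCon (G.others j) x y) : G.SlideOrbit i j y :=
  labelCon_induction (fun _ => bar_mem_others.2)
    (fun _ hf _ => SlideOrbit.mul_lab_bar hpos hno hJ hj hc hf) h hx

end Orbit

end Relabel

section Slide

variable [Subsingleton V] {G : LGraph V E} {e i j : E} {c : ℤ}

theorem not_reachesMultiple_relabel_others (hpos : G.Positive)
    (hno : ¬ G.HasStrictMonotoneCycle) (hJ : ¬ G.JointlyMobile i j) (hj : j ∈ G.others i)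
    (hc : G.lab i = c * G.lab j) {a b : E} (ha : a ∈ ({j, G.bar j} : Set E))
    (hb : b ∈ ({j, G.bar j} : Set E)) :
    ¬ (G.relabel i (c * G.lab (G.bar j))).ReachesMultiple (G.others j) (G.lab a) (G.lab b) := by
  rintro ⟨k, hk, h⟩
  have hx : G.SlideOrbit i j (G.lab a) := by
    rcases ha with rfl | rfl
    · exact .inl ((G.labelCon _).refl _)
    · exact .inr (.inl ((G.labelCon _).refl _))
  have hy := slideOrbit_of_labelCon_relabel hpos hno hJ hj hc hx h
  rcases hb with rfl | rfl
  · exact hk (hy.eq_one_of_lab hpos hno hJ)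
  · exact hk (hy.eq_one_of_lab_bar hpos hno hJ hj)

theorem reachesMultiple_of_relabel (hpos : G.Positive)
    (hno : ¬ G.HasStrictMonotoneCycle) (hJ : ¬ G.JointlyMobile i j) (hj : j ∈ G.others i)
    (hc : G.lab i = c * G.lab j) {a b : E} (ha : a ∈ ({e, G.bar e} : Set E))
    (hb : b ∈ ({e, G.bar e} : Set E))
    (h : (G.relabel i (c * G.lab (G.bar j))).ReachesMultiple (G.others e)
      ((G.relabel i (c * G.lab (G.bar j))).lab a) ((G.relabel i (c * G.lab (G.bar j))).lab b)) :
    G.ReachesMultiple (G.others e) (G.lab a) (G.lab b) := by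
  by_cases hje : j ∈ G.others e
  · obtain ⟨k, hk, h⟩ := h
    exact ReachesMultiple.congr ⟨k, hk, labelCon_relabel_le hje hc h⟩
      (labelCon_relabel_lab hje hc a) (labelCon_relabel_lab hje hc b)
  · have he : e ∈ ({j, G.bar j} : Set E) := not_not.1 fun he => hje (mem_others_comm.1 he)
    have hpair : ({e, G.bar e} : Set E) = {j, G.bar j} :=
      compl_injective (others_eq_of_mem_pair he)
    rw [hpair] at ha hb
    have ne_i {f : E} (hf : f ∈ ({j, G.bar j} : Set E)) : f ≠ i := by
      rintro rfl
      exact mem_others_comm.1 hj hf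
    rw [relabel_lab_of_ne _ (ne_i ha), relabel_lab_of_ne _ (ne_i hb),
      others_eq_of_mem_pair he] at h
    exact absurd h (not_reachesMultiple_relabel_others hpos hno hJ hj hc ha hb)

theorem CanSlide.exists_slide_eq_relabel (hpos : G.Positive) (h : G.CanSlide i j) :
    ∃ c, 0 < c ∧ G.lab i = c * G.lab j ∧ G.slide i j = G.relabel i (c * G.lab (G.bar j)) := by
  obtain ⟨-, -, -, c, hc⟩ := h
  rw [mul_comm] at hc
  exact ⟨c, pos_of_mul_pos_left (hc ▸ hpos i) (hpos j).le, hc, slide_eq_relabel (hpos j).ne' hc⟩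

theorem Positive.slide (hpos : G.Positive) (h : G.CanSlide i j) : (G.slide i j).Positive := by
  obtain ⟨c, hc0, -, heq⟩ := h.exists_slide_eq_relabel hpos
  rw [heq]
  exact hpos.relabel (mul_pos hc0 (hpos _))

theorem reachesMultiple_of_slide (hpos : G.Positive) (hno : ¬ G.HasStrictMonotoneCycle)
    (hJ : ¬ G.JointlyMobile i j) (hij : G.CanSlide i j) {a b : E}
    (ha : a ∈ ({e, G.bar e} : Set E)) (hb : b ∈ ({e, G.bar e} : Set E))
    (h : (G.slide i j).ReachesMultiple (G.others e) ((G.slide i j).lab a)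
      ((G.slide i j).lab b)) :
    G.ReachesMultiple (G.others e) (G.lab a) (G.lab b) := by
  obtain ⟨c, -, hc, heq⟩ := hij.exists_slide_eq_relabel hpos
  rw [heq] at h
  exact reachesMultiple_of_relabel hpos hno hJ hij.mem_others hc ha hb h

theorem not_hasStrictMonotoneCycle_slide (hpos : G.Positive)
    (hno : ¬ G.HasStrictMonotoneCycle) (hJ : ¬ G.JointlyMobile i j) (hij : G.CanSlide i j) :
    ¬ (G.slide i j).HasStrictMonotoneCycle := by
  rw [hasStrictMonotoneCycle_iff (hpos.slide hij)]
  rintro ⟨e, h⟩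
  exact hno ((hasStrictMonotoneCycle_iff hpos).2
    ⟨e, reachesMultiple_of_slide hpos hno hJ hij (.inr rfl) (.inl rfl) h⟩)

theorem Mobile.of_slide (hpos : G.Positive) (hno : ¬ G.HasStrictMonotoneCycle)
    (hJ : ¬ G.JointlyMobile i j) (hij : G.CanSlide i j) (h : (G.slide i j).Mobile e) :
    G.Mobile e := by
  obtain ⟨a, ha, b, hb, h⟩ := (mobile_iff (hpos.slide hij)).1 h
  exact (mobile_iff hpos).2 ⟨a, ha, b, hb, reachesMultiple_of_slide hpos hno hJ hij ha hb h⟩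

end Slide

section Isom

variable {G : LGraph V E} {G' : LGraph V' E'} {Φ : E → E'}

theorem Isom.refl (G : LGraph V E) : Isom G G :=
  ⟨id, id, Function.bijective_id, Function.bijective_id, fun _ => rfl, fun _ => rfl, fun _ => rfl⟩

theorem Isom.symm (h : Isom G G') : Isom G' G := by
  obtain ⟨φ, Φ, hφ, hΦ, ho, hbar, hlab⟩ := h
  let ψ := Equiv.ofBijective φ hφ
  let Ψ := Equiv.ofBijective Φ hΦ
  refine ⟨ψ.symm, Ψ.symm, ψ.symm.bijective, Ψ.symm.bijective, fun x => ?_, fun x => ?_,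
    fun x => ?_⟩ <;> obtain ⟨x, rfl⟩ := Ψ.surjective x
  · rw [Ψ.symm_apply_apply, Equiv.eq_symm_apply]
    exact (ho x).symm
  · rw [Ψ.symm_apply_apply, Equiv.eq_symm_apply]
    exact (hbar x).symm
  · rw [Ψ.symm_apply_apply]
    exact (hlab x).symm

theorem labelCon_preimage (hΦ : Function.Surjective Φ) (hbar : ∀ x, G'.bar (Φ x) = Φ (G.bar x))
    (hlab : ∀ x, G'.lab (Φ x) = G.lab x) (S : Set E') :
    G.labelCon (Φ ⁻¹' S) = G'.labelCon S := by
  simp only [labelCon, hΦ.exists (p := fun f => f ∈ S ∧ _), hbar, hlab,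
    Set.mem_preimage]

theorem preimage_others (hΦ : Function.Injective Φ) (hbar : ∀ x, G'.bar (Φ x) = Φ (G.bar x))
    (e : E) : Φ ⁻¹' G'.others (Φ e) = G.others e := by
  ext f
  simp only [others, hbar, Set.mem_preimage, Set.mem_compl_iff, Set.mem_insert_iff,
    Set.mem_singleton_iff, hΦ.eq_iff]

theorem reachesMultiple_others_iff (hΦ : Function.Bijective Φ)
    (hbar : ∀ x, G'.bar (Φ x) = Φ (G.bar x)) (hlab : ∀ x, G'.lab (Φ x) = G.lab x)
    (e a b : E) : G'.ReachesMultiple (G'.others (Φ e)) (G'.lab (Φ a)) (G'.lab (Φ b)) ↔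
      G.ReachesMultiple (G.others e) (G.lab a) (G.lab b) := by
  rw [ReachesMultiple, ReachesMultiple, ← labelCon_preimage hΦ.2 hbar hlab,
    preimage_others hΦ.1 hbar, hlab, hlab]

end Isom

/-- The property preserved by all moves in the absence of a strict monotone cycle: a rose with
positive labels and no strict monotone cycle on which no slide can create one, either because at
most one pair of edges is mobile or because there are at most three pairs. -/
structure IsRigidRose (G : LGraph V E) : Prop where
  subsingleton : Subsingleton V
  positive : G.Positive
  not_hasStrictMonotoneCycle : ¬ G.HasStrictMonotoneCycle
  mobile_or_card : (∀ x y, G.Mobile x → G.Mobile y → y = x ∨ y = G.bar x) ∨ ENat.card E ≤ 6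

section IsRigidRose

variable {G : LGraph V E} {G' : LGraph V' E'} {e i j : E}

theorem IsRigidRose.not_jointlyMobile (hG : G.IsRigidRose) (hij : G.CanSlide i j) :
    ¬ G.JointlyMobile i j := by
  have := hG.subsingleton
  rcases hG.mobile_or_card with hmob | hE
  · intro hJ
    obtain ⟨hi, hj⟩ := hJ.mobile hG.positive hij.mem_others hij.2.2.2
    exact hij.mem_others (hmob i j hi hj)
  · exact not_jointlyMobile_of_card_le_six hG.positive hG.not_hasStrictMonotoneCycle hE
      hij.mem_others

theorem IsRigidRose.slide (hG : G.IsRigidRose) (hij : G.CanSlide i j) :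
    (G.slide i j).IsRigidRose := by
  have := hG.subsingleton
  have hJ := hG.not_jointlyMobile hij
  have of_slide {e : E} (h : (G.slide i j).Mobile e) : G.Mobile e :=
    h.of_slide hG.positive hG.not_hasStrictMonotoneCycle hJ hij
  exact ⟨this, hG.positive.slide hij,
    not_hasStrictMonotoneCycle_slide hG.positive hG.not_hasStrictMonotoneCycle hJ hij,
    hG.mobile_or_card.imp_left fun h x y hx hy => h x y (of_slide hx) (of_slide hy)⟩

theorem Isom.isRigidRose (h : Isom G G') (hG' : G'.IsRigidRose) : G.IsRigidRose := by
  obtain ⟨φ, Φ, hφ, hΦ, -, hbar, hlab⟩ := h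
  have := hG'.subsingleton
  have : Subsingleton V := hφ.1.subsingleton
  have hpos : G.Positive := fun e => hlab e ▸ hG'.positive (Φ e)
  have hreach := reachesMultiple_others_iff hΦ hbar hlab
  have hmob {e : E} (he : G.Mobile e) : G'.Mobile (Φ e) := by
    have hpair {x : E} (hx : x ∈ ({e, G.bar e} : Set E)) :
        Φ x ∈ ({Φ e, G'.bar (Φ e)} : Set E') := by
      rw [hbar, ← Set.image_pair]
      exact Set.mem_image_of_mem Φ hx
    obtain ⟨a, ha, b, hb, h⟩ := (mobile_iff hpos).1 he
    exact (mobile_iff hG'.positive).2 ⟨Φ a, hpair ha, Φ b, hpair hb, (hreach e a b).2 h⟩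
  refine ⟨this, hpos, fun hcyc => hG'.not_hasStrictMonotoneCycle ?_, ?_⟩
  · obtain ⟨e, h⟩ := (hasStrictMonotoneCycle_iff hpos).1 hcyc
    refine (hasStrictMonotoneCycle_iff hG'.positive).2 ⟨Φ e, ?_⟩
    rw [hbar]
    exact (hreach e (G.bar e) e).2 h
  · rw [ENat.card_congr (Equiv.ofBijective Φ hΦ)]
    refine hG'.mobile_or_card.imp_left fun h x y hx hy => ?_
    simpa only [hbar, hΦ.1.eq_iff] using h _ _ (hmob hx) (hmob hy)

theorem IsRigidRose.eq_one_of_lab_bar_eq_mul (hG : G.IsRigidRose) {k : ℤ}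
    (h : G.lab (G.bar e) = k * G.lab e) : k = 1 :=
  have := hG.subsingleton
  LGraph.eq_one_of_lab_bar_eq_mul hG.positive hG.not_hasStrictMonotoneCycle h

theorem IsRigidRose.lab_bar_eq_one (hG : G.IsRigidRose) (h : G.lab e = 1) :
    G.lab (G.bar e) = 1 :=
  hG.eq_one_of_lab_bar_eq_mul (by rw [h, mul_one])

theorem IsRigidRose.not_hasStrictAscendingLoop (hG : G.IsRigidRose) :
    ¬ G.HasStrictAscendingLoop := fun ⟨_, _, h, h'⟩ => h' (hG.lab_bar_eq_one h)

theorem inductionMove_one (G : LGraph V E) (e : E) : G.inductionMove e 1 = G := by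
  simp only [inductionMove, one_mul, ite_self]

theorem inductionMove_eq_self (he : G.lab (G.bar e) = 1) {m : ℤ} (hm : 1 ≤ m)
    (hdvd : m ∣ G.lab (G.bar e)) : G.inductionMove e m = G := by
  rw [he] at hdvd
  rw [Int.eq_one_of_dvd_one (by lia) hdvd, inductionMove_one]

theorem lab_inductionMove_self (G : LGraph V E) (e : E) (m : ℤ) :
    (G.inductionMove e m).lab e = G.lab e :=
  if_neg fun h => h.1 rfl

theorem lab_inductionMove_bar (G : LGraph V E) (e : E) (m : ℤ) :
    (G.inductionMove e m).lab (G.bar e) = G.lab (G.bar e) :=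
  if_neg fun h => h.2.1 rfl

theorem IsRigidRose.of_isInductionMove (hG : G.IsRigidRose) (h : IsInductionMove G G') :
    G'.IsRigidRose := by
  obtain ⟨e, m, -, he, hm, hdvd, hiso⟩ := h
  rw [inductionMove_eq_self (hG.lab_bar_eq_one he) hm hdvd] at hiso
  exact hiso.isRigidRose hG

theorem IsRigidRose.of_isInductionMove_symm (hG : G.IsRigidRose) (h : IsInductionMove G' G) :
    G'.IsRigidRose := by
  obtain ⟨e, m, -, he, hm, hdvd, hiso⟩ := h
  have hind := hiso.symm.isRigidRose hG
  have hbar : G'.lab (G'.bar e) = 1 := by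
    rw [← lab_inductionMove_bar G' e m]
    exact hind.lab_bar_eq_one (by rw [lab_inductionMove_self, he])
  rwa [inductionMove_eq_self hbar hm hdvd] at hind

theorem not_isAMove_of_subsingleton [Subsingleton V] : ¬ IsAMove G G' := by
  rintro ⟨e, d, -, -, -, -, -, -, -, hd, -⟩
  exact hd (Subsingleton.elim _ _)

theorem IsRigidRose.not_isAMove_symm (hG : G.IsRigidRose) : ¬ IsAMove G' G := by
  rintro ⟨e, d, e', -, -, -, -, hk, -, -, -, -, -, -, -, -, hlab, hlab_bar, -⟩
  refine hk (hG.eq_one_of_lab_bar_eq_mul (e := e') ?_)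
  rw [hlab_bar, hlab, mul_comm]

theorem IsRigidRose.of_elemMove {X Y : BGraph} (hX : X.G.IsRigidRose) (h : X.ElemMove Y) :
    Y.G.IsRigidRose := by
  have := hX.subsingleton
  rcases h with ⟨i, j, hij, hiso⟩ | h | h | h | h
  · exact hiso.isRigidRose (hX.slide hij)
  · exact hX.of_isInductionMove h
  · exact hX.of_isInductionMove_symm h
  · exact absurd h not_isAMove_of_subsingleton
  · exact absurd h hX.not_isAMove_symm

theorem IsRigidRose.of_moveSeq {X Y : BGraph} (hX : X.G.IsRigidRose) (h : X.MoveSeq Y) :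
    Y.G.IsRigidRose := by
  induction h with
  | refl => exact hX
  | tail _ hYZ ih => exact ih.of_elemMove hYZ.1

end IsRigidRose

section Slides

variable [Subsingleton V] {G : LGraph V E} {e f : E} {c y : ℤ}

theorem reduced_of_subsingleton (G : LGraph V E) : G.Reduced :=
  fun _ _ => Subsingleton.elim _ _

theorem isSlideMove_relabel (hpos : G.Positive) (hf : f ∈ G.others e) (c : ℤ) :
    IsSlideMove (G.relabel e (c * G.lab f)) (G.relabel e (c * G.lab (G.bar f))) := by
  have hfe : f ≠ e := fun h => hf (.inl h)
  have hbfe : G.bar f ≠ e := fun h => bar_mem_others.2 hf (.inl h)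
  have hlab : (G.relabel e (c * G.lab f)).lab f = G.lab f := relabel_lab_of_ne _ hfe
  refine ⟨e, f, ⟨hfe, fun h => hf (.inr h), Subsingleton.elim _ _, ?_⟩, ?_⟩
  · rw [relabel_lab_self, hlab]
    exact dvd_mul_left _ _
  · have hlab0 : (G.relabel e (c * G.lab f)).lab f ≠ 0 := by
      rw [hlab]
      exact (hpos f).ne'
    rw [slide_eq_relabel (c := c) hlab0 (by rw [relabel_lab_self, hlab]), relabel_relabel]
    change Isom _ (G.relabel e (c * (G.relabel e _).lab (G.bar f)))
    rw [relabel_lab_of_ne _ hbfe]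
    exact .refl _

theorem moveSeq_relabel (hpos : G.Positive) (h : G.labelCon (G.others e) (G.lab e) y) :
    BGraph.MoveSeq ⟨V, E, G⟩ ⟨V, E, G.relabel e y⟩ := by
  refine labelCon_induction (P := fun y => BGraph.MoveSeq ⟨V, E, G⟩ ⟨V, E, G.relabel e y⟩)
    (fun _ => bar_mem_others.2) (fun f hf c hc => ?_) h ?_
  · exact hc.tail ⟨.inl (isSlideMove_relabel hpos hf c), reduced_of_subsingleton (V := V) _⟩
  · rw [relabel_lab_eq_self]
    exact .refl

end Slides

section Expand

open Classical in
/-- The inverse A-move at the loop `e` of a rose, when `λ(ē) = λ(e)k`: the terminus of `e` is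
moved to a new vertex `none`, where `ē` gets the label `k` and where a new loop
`Sum.inr true` with labels `1` and `k` is attached. -/
noncomputable def expand (G : LGraph V E) (e : E) (k : ℤ) : LGraph (Option V) (E ⊕ Bool) where
  o := Sum.elim (fun x => if x = G.bar e then none else some (G.o x)) (fun _ => none)
  bar := Sum.map G.bar not
  bar_bar := by rintro (x | x) <;> simp [G.bar_bar]
  bar_ne := by rintro (x | x) <;> simp [G.bar_ne]
  lab := Sum.elim (fun x => if x = G.bar e then k else G.lab x) (fun b => if b then 1 else k)

variable {G : LGraph V E} {e : E} {k : ℤ}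

theorem exists_mem_others_of_expand {x : E ⊕ Bool} (h₁ : x ≠ .inr true)
    (h₂ : x ≠ (G.expand e k).bar (.inr true)) (h₃ : x ≠ .inl (G.bar e))
    (h₄ : x ≠ (G.expand e k).bar (.inl (G.bar e))) : ∃ y ∈ G.others e, x = .inl y := by
  rcases x with x | _ | _
  · refine ⟨x, ?_, rfl⟩
    rintro (rfl | rfl)
    · exact h₄ (by simp [expand, G.bar_bar])
    · exact h₃ rfl
  · exact absurd rfl h₂
  · exact absurd rfl h₁

theorem expand_isAMove [Subsingleton V] (hk : k ≠ 1) (he : G.lab e ≠ 1)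
    (h : G.lab (G.bar e) = G.lab e * k) : IsAMove (G.expand e k) G := by
  have hne : e ≠ G.bar e := (G.bar_ne e).symm
  refine ⟨.inr true, .inl (G.bar e), e, (·.getD (G.o e)), Sum.elim id fun _ => e,
    by simp [expand, t], by simp [expand], by simpa [expand] using hk, by simp [expand],
    by simp [expand, t, G.bar_bar, hne], by simpa [expand] using hk,
    by simpa [expand, G.bar_bar, hne] using he, by simp [expand], ?_,
    Subsingleton.elim _ _, Subsingleton.elim _ _, by simp [expand, G.bar_bar, hne],
    by simp [expand, G.bar_bar, hne, h], ?_, fun v => ⟨some v, by simp [expand], rfl⟩,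
    ?_, ?_, ?_⟩
  · rintro (x | _ | _) hx
    · exact .inr (.inr (congrArg _ (by simpa [expand] using hx)))
    · exact .inr (.inl rfl)
    · exact .inl rfl
  · rintro (_ | v) (_ | w) hv hw -
    · rfl
    · exact absurd rfl hv
    · exact absurd rfl hw
    · rw [Subsingleton.elim v w]
  · intro x h₁ h₂ h₃ h₄
    obtain ⟨y, hy, rfl⟩ := exists_mem_others_of_expand h₁ h₂ h₃ h₄
    obtain ⟨hye, hye'⟩ := not_or.1 hy
    exact ⟨hye, hye', Subsingleton.elim _ _, rfl, (if_neg hye').symm⟩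
  · intro x x' h₁ h₂ h₃ h₄ h₁' h₂' h₃' h₄' hxx'
    obtain ⟨y, -, rfl⟩ := exists_mem_others_of_expand h₁ h₂ h₃ h₄
    obtain ⟨y', -, rfl⟩ := exists_mem_others_of_expand h₁' h₂' h₃' h₄'
    exact congrArg _ hxx'
  · intro y hy hy'
    exact ⟨.inl y, by simp, by simp [expand], by simpa using hy',
      by simpa [expand, G.bar_bar] using hy, rfl⟩

theorem expand_reduced [Subsingleton V] (hk : k ≠ 1) (he : G.lab e ≠ 1) :
    (G.expand e k).Reduced := by
  rintro (x | b) hx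
  · have hxe : x ≠ e := by
      rintro rfl
      simp [expand, (G.bar_ne x).symm, he] at hx
    have hxe' : x ≠ G.bar e := by
      rintro rfl
      simp [expand, hk] at hx
    simpa [expand, t, hxe', G.bar_injective.eq_iff, hxe] using Subsingleton.elim _ _
  · rfl

theorem expand_hasStrictAscendingLoop (hk : k ≠ 1) : (G.expand e k).HasStrictAscendingLoop :=
  ⟨.inr true, rfl, rfl, hk⟩

theorem exists_hasStrictAscendingLoop_of_lab_bar_eq_mul [Subsingleton V] (hk : k ≠ 1)
    (h : G.lab (G.bar e) = G.lab e * k) :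
    ∃ Y : BGraph, BGraph.MoveSeq ⟨V, E, G⟩ Y ∧ Y.G.HasStrictAscendingLoop := by
  by_cases he : G.lab e = 1
  · rw [he, one_mul] at h
    exact ⟨⟨V, E, G⟩, .refl, e, Subsingleton.elim (α := V) _ _, he, h.trans_ne hk⟩
  · exact ⟨⟨_, _, G.expand e k⟩, .single ⟨.inr (.inr (.inr (.inr (expand_isAMove hk he h)))),
      expand_reduced hk he⟩, expand_hasStrictAscendingLoop hk⟩

theorem HasStrictMonotoneCycle.exists_hasStrictAscendingLoop [Subsingleton V] (hpos : G.Positive)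
    (h : G.HasStrictMonotoneCycle) :
    ∃ Y : BGraph, BGraph.MoveSeq ⟨V, E, G⟩ Y ∧ Y.G.HasStrictAscendingLoop := by
  obtain ⟨e, k, hk, hcon⟩ := (hasStrictMonotoneCycle_iff hpos).1 h
  rw [← others_bar] at hcon
  let G' := G.relabel (G.bar e) (k * G.lab e)
  have hlab : G'.lab (G'.bar e) = G'.lab e * k := by
    rw [relabel_lab_of_ne _ (G.bar_ne e).symm, mul_comm]
    exact G.relabel_lab_self (G.bar e) _
  obtain ⟨Y, hY, hasc⟩ := exists_hasStrictAscendingLoop_of_lab_bar_eq_mul hk hlab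
  exact ⟨Y, (moveSeq_relabel hpos hcon).trans hY, hasc⟩

end Expand

theorem IsRose.card_le_six {G : LGraph V E} [Finite E] {n : ℕ} (h : G.IsRose n) (hn : n ≤ 3) :
    ENat.card E ≤ 6 := by
  rw [ENat.card_eq_coe_natCard, h.2]
  exact_mod_cast (by lia : 2 * n ≤ 6)

theorem eq_or_eq_bar_of_mem_pair {G : LGraph V E} {e x y : E} (hx : x = e ∨ x = G.bar e)
    (hy : y = e ∨ y = G.bar e) : y = x ∨ y = G.bar x := by
  rcases hx with rfl | rfl
  · exact hy
  · rwa [G.bar_bar, or_comm]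

end LGraph

theorem stmt19_general {V E : Type} [Subsingleton V] (G : LGraph V E) (hpos : G.Positive)
    (hcond : (∀ x y, G.Mobile x → G.Mobile y → y = x ∨ y = G.bar x) ∨ ENat.card E ≤ 6) :
    (∃ Y : BGraph, BGraph.MoveSeq ⟨V, E, G⟩ Y ∧ Y.G.HasStrictAscendingLoop)
      ↔ G.HasStrictMonotoneCycle := by
  refine ⟨?_, fun h => h.exists_hasStrictAscendingLoop hpos⟩
  rintro ⟨Y, hY, hasc⟩
  by_contra hno
  have hG : G.IsRigidRose := ⟨inferInstance, hpos, hno, hcond⟩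
  exact (hG.of_moveSeq (X := ⟨V, E, G⟩) hY).not_hasStrictAscendingLoop hasc

/-- (Corollary 3.10) Let `Γ` be an `n`-rose with positive labels such that
either exactly one pair of edges is mobile, or `n ≤ 3`. Then some reduced labeled graph
obtained from `Γ` by a finite sequence of slide, induction and A-moves (all intermediate
graphs reduced) contains a strict ascending loop if and only if `Γ` contains a strict
monotone cycle. -/
theorem stmt19 {V E : Type} [Finite V] [Finite E] (G : LGraph V E) (n : ℕ)
    (hrose : G.IsRose n) (hpos : G.Positive)
    (hcond : (∃ e : E, G.Mobile e ∧ ∀ x : E, G.Mobile x → x = e ∨ x = G.bar e) ∨ n ≤ 3) :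
    (∃ Y : BGraph, BGraph.MoveSeq ⟨V, E, G⟩ Y ∧ Y.G.HasStrictAscendingLoop)
      ↔ G.HasStrictMonotoneCycle := by
  have : Subsingleton V := (Nat.card_eq_one_iff_unique.1 hrose.1).1
  exact stmt19_general G hpos (hcond.imp (fun ⟨_, _, he⟩ _ _ hx hy =>
    LGraph.eq_or_eq_bar_of_mem_pair (he _ hx) (he _ hy)) hrose.card_le_six)
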